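/- arXiv:1711.01364 — 5 statements merged into one kernel-verified Lean document; each statement's English description precedes it below -/
import Mathlib

section
/- Let G = (V, E, w_G) be a weighted directed graph with non-negative integer edge weights, let s ∈ V be a source node, and let h be an integer with 1 ≤ h ≤ |V|. Let C be a skeleton set for (G, s, h), let d̃ : C × V → ℕ∞ satisfy dist_G(x, v) ≤ d̃(x, v) ≤ 2·dist_G^h(x, v) for every x ∈ C and every v ∈ V, and let H and G' be the skeleton graph and the augmented graph built from C and d̃. Then for every node v ∈ V, dist_G(s, v) ≤ dist_{G'}^h(s, v) ≤ 2·dist_G(s, v); and for every edge (u, v) ∈ E, dist_{G'}^h(s, v) ≤ dist_{G'}^h(s, u) + 2·w_G(u, v). -/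
/-!
Let `Φ(v) = inf_{x ∈ C} (dist_H(s, x) + 2 · dist_G(x, v))`. The heart of the proof is the identity
`dist_{G'}^h(s, v) = Φ(v)`; all the claims are immediate for `Φ`.

* `Φ ≤ dist_{G'}^h` (`pot_le_hdist`): `Φ(s) = 0` and `Φ(v) ≤ Φ(u) + w_{G'}(u, v)` along every edge
  of `G'`, so `Φ` bounds the weight of every walk of `G'` from `s` from below (`IsWk.potential`).
* `dist_{G'}^h ≤ Φ` (`hdist_le_of_shortest`): for `x ∈ C` and a shortest `G`-path from `x` to `v`
  with `k` edges, induct on `k`. If `k < h`, the edge `(s, x)` of `G'` followed by the path has at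
  most `h` edges. Otherwise the `⌈h/2⌉` nodes following `x` on the path form a shortest path, which
  can be exchanged for one that contains a skeleton node `y`. Then `y` is at most `h` hops from `x`,
  so `dist_H(s, y) ≤ dist_H(s, x) + 2 · dist_G(x, y)`, and the induction hypothesis applies to `y`,
  which has fewer edges left to `v`.

Walks are handled through the inductive predicate `IsWk`, which records the number of edges and the
weight and is easier to split and concatenate than node lists.
-/

open scoped ENat ENNReal

section SSSP

variable {V : Type*}

/-- A walk (path) from `u` to `v` in the directed graph with edge set `E`:
a nonempty list of nodes starting at `u`, ending at `v`, with consecutive pairs in `E`. -/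
def IsWalk (E : Set (V × V)) (u v : V) (p : List V) : Prop :=
  p ≠ [] ∧ p.head? = some u ∧ p.getLast? = some v ∧ p.Chain' (fun a b => (a, b) ∈ E)

/-- The weight of a walk: the sum of the weights of its edges. -/
def walkWeight (w : V × V → ℕ∞) (p : List V) : ℕ∞ :=
  ((p.zip p.tail).map w).sum

/-- The distance from `u` to `v`: the minimum weight of a walk from `u` to `v`
(`⊤` if none exists; it is `0` for `u = v` via the single-node walk). -/
noncomputable def gdist (E : Set (V × V)) (w : V × V → ℕ∞) (u v : V) : ℕ∞ :=
  sInf {c | ∃ p, IsWalk E u v p ∧ walkWeight w p = c}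

/-- The `h`-hop distance: the minimum weight of a walk from `u` to `v`
with at most `h` edges (i.e. at most `h + 1` nodes); `⊤` if none exists. -/
noncomputable def hdist (E : Set (V × V)) (w : V × V → ℕ∞) (h : ℕ) (u v : V) : ℕ∞ :=
  sInf {c | ∃ p, IsWalk E u v p ∧ p.length ≤ h + 1 ∧ walkWeight w p = c}

/-- `C ⊆ V` is a skeleton set for `(G, s, h)`: it contains `s`, and for every pair
`u, v` such that some shortest path from `u` to `v` consists of exactly `⌈h/2⌉` nodes,
there is a shortest path from `u` to `v` with exactly `⌈h/2⌉` nodes containing a node of `C`. -/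
def IsSkeleton (E : Set (V × V)) (w : V × V → ℕ∞) (s : V) (h : ℕ) (C : Set V) : Prop :=
  s ∈ C ∧ ∀ u v : V,
    (∃ p, IsWalk E u v p ∧ walkWeight w p = gdist E w u v ∧ p.length = (h + 1) / 2) →
    ∃ p, IsWalk E u v p ∧ walkWeight w p = gdist E w u v ∧ p.length = (h + 1) / 2 ∧
      ∃ x ∈ C, x ∈ p

end SSSP

section Walks

/-! ### Walks with recorded length and weight -/

variable {V : Type*} {E : Set (V × V)} {w : V × V → ℕ∞}

/-- `IsWk E w n u v c`: there is a walk from `u` to `v` with exactly `n` edges and weight `c`. -/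
inductive IsWk (E : Set (V × V)) (w : V × V → ℕ∞) : ℕ → V → V → ℕ∞ → Prop
  | nil (u : V) : IsWk E w 0 u u 0
  | cons {n : ℕ} {u a v : V} {c : ℕ∞} (he : (u, a) ∈ E) (hp : IsWk E w n a v c) :
      IsWk E w (n + 1) u v (w (u, a) + c)

theorem IsWk.single {u v : V} (he : (u, v) ∈ E) : IsWk E w 1 u v (w (u, v)) := by
  simpa using IsWk.cons (w := w) he (IsWk.nil v)

theorem IsWk.append {n m : ℕ} {u a v : V} {c d : ℕ∞} (hp : IsWk E w n u a c)
    (hq : IsWk E w m a v d) : IsWk E w (n + m) u v (c + d) := by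
  induction hp with
  | nil u => simpa using hq
  | cons he _ ih =>
    have := IsWk.cons he (ih hq)
    rwa [← add_assoc, Nat.add_right_comm] at this

theorem IsWk.split {u v : V} {i j : ℕ} {c : ℕ∞} (hp : IsWk E w (i + j) u v c) :
    ∃ a c₁ c₂, IsWk E w i u a c₁ ∧ IsWk E w j a v c₂ ∧ c₁ + c₂ = c := by
  induction i generalizing u c with
  | zero => exact ⟨u, 0, c, .nil u, by simpa using hp, by simp⟩
  | succ i ih =>
    rw [Nat.add_right_comm] at hp
    cases hp with
    | cons he hp =>
      obtain ⟨a, c₁, c₂, h₁, h₂, rfl⟩ := ih hp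
      exact ⟨a, _, c₂, .cons he h₁, h₂, add_assoc _ _ _⟩

theorem IsWk.exists_list {n : ℕ} {u v : V} {c : ℕ∞} (hp : IsWk E w n u v c) :
    ∃ p, IsWalk E u v p ∧ p.length = n + 1 ∧ walkWeight w p = c := by
  induction hp with
  | nil u => exact ⟨[u], ⟨by simp, by simp, by simp, List.isChain_singleton u⟩, by simp,
      by simp [walkWeight]⟩
  | @cons n u a v c he _ ih =>
    obtain ⟨p, ⟨h0, h1, h2, h3⟩, hl, rfl⟩ := ih
    obtain _ | ⟨b, p⟩ := p
    · exact absurd rfl h0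
    obtain rfl : b = a := by simpa using h1
    refine ⟨u :: b :: p, ⟨by simp, by simp, ?_, ?_⟩, by simpa using hl, by simp [walkWeight]⟩
    · simpa using h2
    · exact List.isChain_cons_cons.2 ⟨he, h3⟩

theorem IsWalk.isWk {u v : V} {p : List V} (hp : IsWalk E u v p) :
    IsWk E w (p.length - 1) u v (walkWeight w p) := by
  induction p generalizing u with
  | nil => exact absurd rfl hp.1
  | cons b p ih =>
    obtain ⟨h0, h1, h2, h3⟩ := hp
    obtain rfl : b = u := by simpa using h1
    obtain _ | ⟨a, p⟩ := p
    · obtain rfl : b = v := by simpa using h2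
      simpa [walkWeight] using IsWk.nil (E := E) (w := w) b
    · have h3' := List.isChain_cons_cons.1 h3
      have := ih (u := a) ⟨by simp, by simp, by simpa using h2, h3'.2⟩
      simpa [walkWeight] using IsWk.cons h3'.1 this

theorem IsWalk.isWk_split {u v x : V} {p : List V} (hp : IsWalk E u v p) (hx : x ∈ p) :
    ∃ i j c₁ c₂, IsWk E w i u x c₁ ∧ IsWk E w j x v c₂ ∧ i + j + 1 = p.length ∧
      c₁ + c₂ = walkWeight w p := by
  induction p generalizing u with
  | nil => exact absurd rfl hp.1
  | cons b p ih =>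
    have hp' := hp
    obtain ⟨h0, h1, h2, h3⟩ := hp
    obtain rfl : b = u := by simpa using h1
    obtain rfl | hx := List.mem_cons.1 hx
    · exact ⟨0, _, 0, _, .nil _, hp'.isWk, by simp, by simp⟩
    · obtain _ | ⟨a, p⟩ := p
      · simp at hx
      · have h3' := List.isChain_cons_cons.1 h3
        obtain ⟨i, j, c₁, c₂, hi, hj, hl, hc⟩ :=
          ih (u := a) ⟨by simp, by simp, by simpa using h2, h3'.2⟩ hx
        refine ⟨i + 1, j, _, c₂, .cons h3'.1 hi, hj, by simp at hl ⊢; omega, ?_⟩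
        rw [add_assoc, hc]
        simp [walkWeight]

theorem gdist_le {n : ℕ} {u v : V} {c : ℕ∞} (hp : IsWk E w n u v c) : gdist E w u v ≤ c := by
  obtain ⟨p, h1, -, h3⟩ := hp.exists_list
  exact sInf_le ⟨p, h1, h3⟩

theorem hdist_le {n h : ℕ} {u v : V} {c : ℕ∞} (hp : IsWk E w n u v c) (hn : n ≤ h) :
    hdist E w h u v ≤ c := by
  obtain ⟨p, h1, h2, h3⟩ := hp.exists_list
  exact sInf_le ⟨p, h1, by omega, h3⟩

theorem le_gdist {u v : V} {b : ℕ∞} (hb : ∀ n c, IsWk E w n u v c → b ≤ c) :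
    b ≤ gdist E w u v := by
  refine le_sInf ?_
  rintro _ ⟨p, hp, rfl⟩
  exact hb _ _ hp.isWk

theorem le_hdist {h : ℕ} {u v : V} {b : ℕ∞} (hb : ∀ n c, IsWk E w n u v c → b ≤ c) :
    b ≤ hdist E w h u v := by
  refine le_sInf ?_
  rintro _ ⟨p, hp, -, rfl⟩
  exact hb _ _ hp.isWk

/-- The infimum defining `gdist` is attained as soon as it is finite. -/
theorem exists_isWk_gdist {u v : V} (hf : gdist E w u v ≠ ⊤) :
    ∃ n, IsWk E w n u v (gdist E w u v) := by
  have hne : {c | ∃ p, IsWalk E u v p ∧ walkWeight w p = c}.Nonempty := by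
    by_contra hne
    rw [Set.not_nonempty_iff_eq_empty] at hne
    exact hf (by rw [gdist, hne, sInf_empty])
  obtain ⟨p, hp, hc⟩ := csInf_mem hne
  refine ⟨p.length - 1, ?_⟩
  rw [gdist, ← hc]
  exact hp.isWk

theorem gdist_self (u : V) : gdist E w u u = 0 :=
  le_antisymm (gdist_le (.nil u)) bot_le

theorem gdist_triangle (u a v : V) : gdist E w u v ≤ gdist E w u a + gdist E w a v := by
  by_cases h1 : gdist E w u a = ⊤
  · simp [h1]
  by_cases h2 : gdist E w a v = ⊤
  · simp [h2]
  obtain ⟨n, hn⟩ := exists_isWk_gdist h1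
  obtain ⟨m, hm⟩ := exists_isWk_gdist h2
  exact gdist_le (hn.append hm)

theorem gdist_edge {u a : V} (he : (u, a) ∈ E) : gdist E w u a ≤ w (u, a) :=
  gdist_le (.single he)

/-- A function that grows by at most the edge weight along each edge grows by at most the walk
weight along each walk. -/
theorem IsWk.potential {f : V → ℕ∞} (hf : ∀ u a, (u, a) ∈ E → f a ≤ f u + w (u, a))
    {n : ℕ} {u v : V} {c : ℕ∞} (hp : IsWk E w n u v c) : f v ≤ f u + c := by
  induction hp with
  | nil u => simp
  | cons he _ ih =>
    refine ih.trans ?_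
    rw [← add_assoc]
    gcongr
    exact hf _ _ he

/-- A walk survives with at most doubled weight in a supergraph whose weights are at most doubled. -/
theorem IsWk.double {E' : Set (V × V)} {w' : V × V → ℕ∞} (hE : E ⊆ E')
    (hw : ∀ e ∈ E, w' e ≤ 2 * w e) {n : ℕ} {u v : V} {c : ℕ∞} (hp : IsWk E w n u v c) :
    ∃ c' ≤ 2 * c, IsWk E' w' n u v c' := by
  induction hp with
  | nil u => exact ⟨0, by simp, .nil u⟩
  | cons he _ ih =>
    obtain ⟨c', hc, hp⟩ := ih
    refine ⟨_, ?_, .cons (hE he) hp⟩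
    rw [mul_add]
    exact add_le_add (hw _ he) hc

/-- Both halves of a shortest walk of finite weight are shortest. -/
theorem shortest_split {i j : ℕ} {u a v : V} {c₁ c₂ : ℕ∞} (h₁ : IsWk E w i u a c₁)
    (h₂ : IsWk E w j a v c₂) (hc : c₁ + c₂ = gdist E w u v) (hf : gdist E w u v ≠ ⊤) :
    c₁ = gdist E w u a ∧ c₂ = gdist E w a v := by
  have hf' := hf
  rw [← hc] at hf'
  obtain ⟨f1, f2⟩ : c₁ ≠ ⊤ ∧ c₂ ≠ ⊤ := by simpa using hf'
  have ht := gdist_triangle (E := E) (w := w) u a v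
  rw [← hc] at ht
  have g1 := gdist_le h₁
  have g2 := gdist_le h₂
  refine ⟨le_antisymm ?_ g1, le_antisymm ?_ g2⟩
  · exact (ENat.add_le_add_iff_right f2).1 (ht.trans (by gcongr))
  · exact (ENat.add_le_add_iff_left f1).1 (ht.trans (by gcongr))

end Walks

/-! ### Skeleton nodes and the potential `Φ` -/

section Skeleton

variable {V : Type*} {E E' : Set (V × V)} {w w' : V × V → ℕ∞} {s : V} {h : ℕ} {C : Set V}
  {D : V → ℕ∞}

/-- A shortest walk from `x` to `v` with at least `h` edges passes, after the `⌈h/2⌉` nodes that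
follow `x` are exchanged, through a skeleton node `y` at a position between `1` and `h`. That the
position is positive is recorded as `j < k`: fewer edges than before remain from `y` to `v`. -/
theorem exists_skeleton_node (hh : 1 ≤ h) (hC : IsSkeleton E w s h C) {k : ℕ} {x v : V}
    (hk : h ≤ k) (hf : gdist E w x v ≠ ⊤) (hp : IsWk E w k x v (gdist E w x v)) :
    ∃ y ∈ C, ∃ i j, i ≤ h ∧ j < k ∧ IsWk E w i x y (gdist E w x y) ∧
      IsWk E w j y v (gdist E w y v) ∧ gdist E w x y + gdist E w y v = gdist E w x v := by
  -- `m` is the number of edges of a path with `⌈h/2⌉` nodes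
  obtain ⟨m, hm⟩ : ∃ m, (h + 1) / 2 = m + 1 := ⟨(h + 1) / 2 - 1, by omega⟩
  obtain ⟨r, rfl⟩ : ∃ r, k = 1 + (m + r) := ⟨k - 1 - m, by omega⟩
  obtain ⟨a, c₁, c, h₁, hrest, hc⟩ := hp.split
  obtain ⟨b, c₂, c₃, h₂, h₃, rfl⟩ := hrest.split
  have ha := (shortest_split h₁ hrest hc hf).2
  have hfa : gdist E w a v ≠ ⊤ := by
    rw [← ha]
    rw [← hc] at hf
    exact fun ht => hf (by simp [ht])
  have hb := (shortest_split h₂ h₃ ha hfa).1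
  obtain ⟨p, hp, hl, hw⟩ := h₂.exists_list
  obtain ⟨q, hq, hqw, hql, y, hyC, hyq⟩ :=
    hC.2 a b ⟨p, hp, hw.trans hb, hl.trans hm.symm⟩
  obtain ⟨i, j, d₁, d₂, hi, hj, hij, hd⟩ := hq.isWk_split (w := w) hyq
  have hxy := h₁.append hi
  have hyv := hj.append h₃
  have hsum : (c₁ + d₁) + (d₂ + c₃) = gdist E w x v := by
    rw [← hc, hb, ← hqw, ← hd]
    ring
  obtain ⟨e₁, e₂⟩ := shortest_split hxy hyv hsum hf
  rw [e₁, e₂] at hsum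
  rw [e₁] at hxy
  rw [e₂] at hyv
  exact ⟨y, hyC, 1 + i, j + r, by omega, by omega, hxy, hyv, hsum⟩

/-- Here `D x` plays the role of `dist_H(s, x)`: all that matters is that it bounds the weight of
the edge `(s, x)` of the augmented graph and grows by at most `2 · dist_G^h(x, y)` from `x` to `y`. -/
theorem hdist_le_of_shortest (hh : 1 ≤ h) (hC : IsSkeleton E w s h C)
    (hE : E ⊆ E') (hw : ∀ e ∈ E, w' e ≤ 2 * w e)
    (hEs : ∀ x ∈ C, (s, x) ∈ E') (hws : ∀ x ∈ C, w' (s, x) ≤ D x)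
    (hD : ∀ x ∈ C, ∀ y ∈ C, D y ≤ D x + 2 * hdist E w h x y) (k : ℕ) (v : V) :
    ∀ x ∈ C, gdist E w x v ≠ ⊤ → IsWk E w k x v (gdist E w x v) →
      hdist E' w' h s v ≤ D x + 2 * gdist E w x v := by
  induction k using Nat.strong_induction_on with
  | _ k ih =>
    intro x hx hf hp
    by_cases hk : k < h
    · obtain ⟨c', hc', hp'⟩ := hp.double hE hw
      exact (hdist_le (.cons (hEs x hx) hp') hk).trans (add_le_add (hws x hx) hc')
    · obtain ⟨y, hy, i, j, hi, hj, hxy, hyv, hsum⟩ :=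
        exists_skeleton_node hh hC (not_lt.1 hk) hf hp
      have hfy : gdist E w y v ≠ ⊤ := by
        rw [← hsum] at hf
        exact fun ht => hf (by simp [ht])
      calc hdist E' w' h s v ≤ D y + 2 * gdist E w y v := ih j hj y hy hfy hyv
        _ ≤ (D x + 2 * gdist E w x y) + 2 * gdist E w y v := by
            gcongr
            refine (hD x hx y hy).trans ?_
            gcongr
            exact hdist_le hxy hi
        _ = D x + 2 * gdist E w x v := by rw [← hsum]; ring

/-- The potential `Φ(v) = inf_{x ∈ C} (D x + 2 · dist_G(x, v))`, used with `D x = dist_H(s, x)`. -/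
noncomputable def pot (E : Set (V × V)) (w : V × V → ℕ∞) (C : Set V) (D : V → ℕ∞) (v : V) : ℕ∞ :=
  ⨅ x ∈ C, (D x + 2 * gdist E w x v)

theorem pot_le {x : V} (hx : x ∈ C) (v : V) : pot E w C D v ≤ D x + 2 * gdist E w x v :=
  iInf₂_le x hx

theorem pot_edge (hs : s ∈ C) {u a : V} (he : (u, a) ∈ E) :
    pot E w C D a ≤ pot E w C D u + 2 * w (u, a) := by
  -- the infimum over the nonempty set `C` is attained
  obtain ⟨x, hx, hxu⟩ : ∃ x ∈ C, pot E w C D u = D x + 2 * gdist E w x u := by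
    have hne : ((fun x => D x + 2 * gdist E w x u) '' C).Nonempty := ⟨_, s, hs, rfl⟩
    obtain ⟨x, hx, hxe⟩ := csInf_mem hne
    exact ⟨x, hx, by rw [pot, ← sInf_image, ← hxe]⟩
  rw [hxu, add_assoc, ← mul_add]
  refine (pot_le hx a).trans ?_
  gcongr
  exact (gdist_triangle x u a).trans (by gcongr; exact gdist_edge he)

theorem pot_le_hdist (hs : s ∈ C) (hDs : D s = 0)
    (hw' : ∀ e ∈ E', (e ∈ E ∧ w' e = 2 * w e) ∨ (e.1 = s ∧ e.2 ∈ C ∧ w' e = D e.2)) (v : V) :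
    pot E w C D v ≤ hdist E' w' h s v := by
  refine le_hdist fun n c hp => ?_
  have h0 : pot E w C D s = 0 :=
    le_antisymm (by simpa [hDs, gdist_self] using pot_le (E := E) (w := w) (D := D) hs s) bot_le
  have := hp.potential (f := pot E w C D) fun u a he => ?_
  · simpa [h0] using this
  · obtain ⟨hE, hwe⟩ | ⟨-, ha, hwe⟩ := hw' _ he
    · rw [hwe]
      exact pot_edge hs hE
    · rw [hwe]
      refine le_add_left ?_
      simpa [gdist_self] using pot_le (E := E) (w := w) (D := D) ha a

end Skeleton

/-- With the skeleton set `C`, estimates `d̃`, skeleton graph `H`, and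
augmented graph `G'` as described, for every node `v` we have
`dist_G(s,v) ≤ dist_{G'}^h(s,v) ≤ 2·dist_G(s,v)` (the stated bounds on
`(1/2)·dist_{G'}^h(s,v)` multiplied through by 2), and for every edge `(u,v) ∈ E`,
`dist_{G'}^h(s,v) ≤ dist_{G'}^h(s,u) + 2·w_G(u,v)`. -/
theorem skeleton_augmented_graph_estimate_conditions
    {V : Type*} [Fintype V]
    (E : Set (V × V)) (wG : V × V → ℕ) (s : V) (h : ℕ)
    (hh1 : 1 ≤ h) (hh2 : h ≤ Fintype.card V)
    (C : Set V) (hC : IsSkeleton E (fun e => (wG e : ℕ∞)) s h C)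
    (dtil : V → V → ℕ∞)
    (hdtil : ∀ x ∈ C, ∀ v : V,
      gdist E (fun e => (wG e : ℕ∞)) x v ≤ dtil x v ∧
      dtil x v ≤ 2 * hdist E (fun e => (wG e : ℕ∞)) h x v)
    -- the skeleton graph `H = (C, C × C, w_H)`
    (EH : Set (V × V)) (hEH : EH = C ×ˢ C)
    (wH : V × V → ℕ∞) (hwH : ∀ e ∈ EH, wH e = dtil e.1 e.2)
    -- the augmented graph `G' = (V, E ∪ {s} × C, w_{G'})`
    (E' : Set (V × V)) (hE' : E' = E ∪ ({s} : Set V) ×ˢ C)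
    (wG' : V × V → ℕ∞)
    (hw1 : ∀ e ∈ E, e ∉ ({s} : Set V) ×ˢ C → wG' e = 2 * (wG e : ℕ∞))
    (hw2 : ∀ e ∉ E, e ∈ ({s} : Set V) ×ˢ C → wG' e = gdist EH wH e.1 e.2)
    (hw3 : ∀ e ∈ E, e ∈ ({s} : Set V) ×ˢ C →
      wG' e = min (gdist EH wH e.1 e.2) (2 * (wG e : ℕ∞))) :
    (∀ v : V,
      gdist E (fun e => (wG e : ℕ∞)) s v ≤ hdist E' wG' h s v ∧
      hdist E' wG' h s v ≤ 2 * gdist E (fun e => (wG e : ℕ∞)) s v) ∧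
    (∀ e ∈ E, hdist E' wG' h s e.2 ≤ hdist E' wG' h s e.1 + 2 * (wG e : ℕ∞)) := by
  subst hEH hE'
  set w : V × V → ℕ∞ := fun e => (wG e : ℕ∞) with hw
  set D : V → ℕ∞ := fun x => gdist (C ×ˢ C) wH s x with hDdef
  have hs : s ∈ C := hC.1
  have hDs : D s = 0 := gdist_self s
  have hDh : ∀ x ∈ C, ∀ y ∈ C, D y ≤ D x + 2 * hdist E w h x y := by
    intro x hx y hy
    have hxy : (x, y) ∈ C ×ˢ C := ⟨hx, hy⟩
    refine (gdist_triangle s x y).trans ?_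
    refine add_le_add le_rfl ((gdist_edge hxy).trans ?_)
    rw [hwH _ hxy]
    exact (hdtil x hx y).2
  have hDG : ∀ x, gdist E w s x ≤ D x := by
    intro x
    refine le_gdist fun n c hp => ?_
    have := hp.potential (f := gdist E w s) fun u a he => ?_
    · simpa [gdist_self] using this
    · refine (gdist_triangle s u a).trans ?_
      rw [hwH _ he]
      gcongr
      exact (hdtil u he.1 a).1
  have hwE : ∀ e ∈ E, wG' e ≤ 2 * w e := by
    intro e he
    by_cases hes : e ∈ ({s} : Set V) ×ˢ C
    · rw [hw3 e he hes]
      exact min_le_right _ _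
    · exact (hw1 e he hes).le
  have hws : ∀ x ∈ C, wG' (s, x) ≤ D x := by
    intro x hx
    have hes : (s, x) ∈ ({s} : Set V) ×ˢ C := ⟨rfl, hx⟩
    by_cases he : (s, x) ∈ E
    · rw [hw3 _ he hes]
      exact min_le_left _ _
    · exact (hw2 _ he hes).le
  have hw' : ∀ e ∈ E ∪ ({s} : Set V) ×ˢ C,
      (e ∈ E ∧ wG' e = 2 * w e) ∨ (e.1 = s ∧ e.2 ∈ C ∧ wG' e = D e.2) := by
    rintro ⟨u, a⟩ hmem
    by_cases hes : (u, a) ∈ ({s} : Set V) ×ˢ C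
    · obtain ⟨hu, ha⟩ := hes
      obtain rfl : u = s := hu
      by_cases he : (u, a) ∈ E
      · have h3 := hw3 _ he ⟨rfl, ha⟩
        rcases min_choice (gdist (C ×ˢ C) wH u a) (2 * (wG (u, a) : ℕ∞)) with hm | hm
        · exact .inr ⟨rfl, ha, h3.trans hm⟩
        · exact .inl ⟨he, h3.trans hm⟩
      · exact .inr ⟨rfl, ha, hw2 _ he ⟨rfl, ha⟩⟩
    · have he : (u, a) ∈ E := hmem.resolve_right hes
      exact .inl ⟨he, hw1 _ he hes⟩
  have key : ∀ v, hdist (E ∪ ({s} : Set V) ×ˢ C) wG' h s v = pot E w C D v := by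
    intro v
    refine le_antisymm (le_iInf₂ fun x hx => ?_) (pot_le_hdist hs hDs hw' v)
    by_cases hf : gdist E w x v = ⊤
    · simp [hf]
    obtain ⟨k, hk⟩ := exists_isWk_gdist hf
    exact hdist_le_of_shortest hh1 hC Set.subset_union_left hwE
      (fun x hx => Set.mem_union_right _ (Set.mk_mem_prod (Set.mem_singleton s) hx)) hws hDh k v x hx hf hk
  refine ⟨fun v => ?_, fun e he => ?_⟩
  · rw [key]
    constructor
    · refine le_iInf₂ fun x hx => (gdist_triangle s x v).trans (add_le_add (hDG x) ?_)
      exact le_mul_of_one_le_left bot_le (by norm_num)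
    · simpa [hDs] using pot_le (E := E) (w := w) (D := D) hs v
  · rw [key, key]
    exact pot_edge (w := w) hs he
end

section
/- Let G = (V, E, w_G) be a weighted directed graph with non-negative integer edge weights, let s ∈ V, and let h ≥ 1 be an integer. Let G' = (V, E', w_{G'}) be a weighted directed graph on the same node set with E ⊆ E' and w_{G'}(u, v) ≤ 2·w_G(u, v) for every edge (u, v) ∈ E. Suppose that for every node v ∈ V, dist_G(s, v) ≤ dist_{G'}(s, v) ≤ 2·dist_G(s, v) and dist_{G'}^h(s, v) = dist_{G'}(s, v). Then the estimate d̂(s, v) := (1/2)·dist_{G'}^h(s, v) satisfies, for every node v ∈ V, (1/2)·dist_G(s, v) ≤ d̂(s, v) ≤ dist_G(s, v), and for every edge (u, v) ∈ E, d̂(s, v) ≤ d̂(s, u) + w_G(u, v). -/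
/-!
The first conclusion is the hypotheses combined: the hop-bounded distance `dist_{G'}^h(s, ·)` equals
`dist_{G'}(s, ·)`, which is sandwiched by assumption. For the second, the same identification turns
the claim into one about `dist_{G'}`, where `dist_{G'}(s, v) ≤ dist_{G'}(s, u) + w_{G'}(u, v)` because
a walk to `u` extends by the edge `(u, v)` (`gdist_le_add_edge`), and `w_{G'} ≤ 2 w_G` on `E`.
-/

open scoped ENat ENNReal

section EdgeRelaxation

variable {V : Type*}

lemma walkWeight_concat (w : V × V → ℕ∞) (p : List V) (u v : V) (hp : p.getLast? = some u) :
    walkWeight w (p ++ [v]) = walkWeight w p + w (u, v) := by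
  induction p with
  | nil => simp at hp
  | cons a t ih =>
    cases t with
    | nil =>
      simp at hp
      simp [walkWeight, hp]
    | cons b t =>
      have h1 := ih (by simpa [List.getLast?_cons_cons] using hp)
      simp only [walkWeight, List.cons_append, List.tail_cons, List.zip_cons_cons,
        List.map_cons, List.sum_cons] at h1 ⊢
      rw [h1, add_assoc]

lemma IsWalk.concat {E : Set (V × V)} {s u v : V} {p : List V} (hp : IsWalk E s u p)
    (huv : (u, v) ∈ E) : IsWalk E s v (p ++ [v]) := by
  obtain ⟨hne, hhead, hlast, hchain⟩ := hp
  refine ⟨by simp, by simp [List.head?_append, hhead], by simp, ?_⟩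
  refine List.IsChain.append hchain (List.isChain_singleton v) ?_
  intro x hx y hy
  rw [hlast] at hx
  simp at hx hy
  subst hx hy
  exact huv

/-- Unbounded distances satisfy the edge-relaxation inequality; the hop-bounded ones need not,
since the extended walk has one more edge. -/
lemma gdist_le_add_edge {E : Set (V × V)} (w : V × V → ℕ∞) (s : V) {u v : V}
    (huv : (u, v) ∈ E) : gdist E w s v ≤ gdist E w s u + w (u, v) := by
  rcases Set.eq_empty_or_nonempty {c | ∃ p, IsWalk E s u p ∧ walkWeight w p = c} with h | h
  · -- no walk reaches `u`, so the right-hand side is `⊤`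
    simp [gdist, h]
  · obtain ⟨p, hp, hpw⟩ := csInf_mem h
    have hle : gdist E w s v ≤ walkWeight w (p ++ [v]) := sInf_le ⟨_, hp.concat huv, rfl⟩
    rwa [walkWeight_concat w p u v hp.2.2.1, hpw] at hle

end EdgeRelaxation

/-- If `G' = (V, E', w_{G'})` has `E ⊆ E'` and `w_{G'}(u,v) ≤ 2·w_G(u,v)`
on every edge of `E`, and if `dist_G(s,v) ≤ dist_{G'}(s,v) ≤ 2·dist_G(s,v)` and
`dist_{G'}^h(s,v) = dist_{G'}(s,v)` for every `v`, then the estimate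
`d̂(s,v) = (1/2)·dist_{G'}^h(s,v)` satisfies (after multiplying through by 2)
`dist_G(s,v) ≤ dist_{G'}^h(s,v) ≤ 2·dist_G(s,v)` for every node `v`, and
`dist_{G'}^h(s,v) ≤ dist_{G'}^h(s,u) + 2·w_G(u,v)` for every edge `(u,v) ∈ E`. -/
theorem half_hop_distance_estimate_conditions
    {V : Type*} [Fintype V]
    (E E' : Set (V × V)) (hEE' : E ⊆ E')
    (wG wG' : V × V → ℕ)
    (hw : ∀ e ∈ E, (wG' e : ℕ∞) ≤ 2 * (wG e : ℕ∞))
    (s : V) (h : ℕ) (hh : 1 ≤ h)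
    (hlow : ∀ v : V, gdist E (fun e => (wG e : ℕ∞)) s v ≤ gdist E' (fun e => (wG' e : ℕ∞)) s v)
    (hup : ∀ v : V, gdist E' (fun e => (wG' e : ℕ∞)) s v ≤ 2 * gdist E (fun e => (wG e : ℕ∞)) s v)
    (hhop : ∀ v : V, hdist E' (fun e => (wG' e : ℕ∞)) h s v = gdist E' (fun e => (wG' e : ℕ∞)) s v) :
    (∀ v : V,
      gdist E (fun e => (wG e : ℕ∞)) s v ≤ hdist E' (fun e => (wG' e : ℕ∞)) h s v ∧
      hdist E' (fun e => (wG' e : ℕ∞)) h s v ≤ 2 * gdist E (fun e => (wG e : ℕ∞)) s v) ∧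
    (∀ e ∈ E,
      hdist E' (fun e => (wG' e : ℕ∞)) h s e.2 ≤
        hdist E' (fun e => (wG' e : ℕ∞)) h s e.1 + 2 * (wG e : ℕ∞)) := by
  refine ⟨fun v => ?_, fun e he => ?_⟩
  · rw [hhop v]
    exact ⟨hlow v, hup v⟩
  · rw [hhop, hhop]
    exact (gdist_le_add_edge _ s (hEE' he)).trans (add_le_add_right (hw e he) _)
end

section
/- Let c ≥ 1 be a real number, let U be a finite set of size s ≥ 1, and let S_1, S_2, …, S_k (k ≥ 1) be subsets of U, each of size at least q, where q ≥ 1. Let x = c·ln(k·s) + 1 and p = min(x/q, 1). Let T be a random subset of U obtained by including each element of U independently with probability p. Then with probability at least 1 − 1/s^c, both of the following hold simultaneously: (1) for every 1 ≤ i ≤ k, S_i ∩ T ≠ ∅; and (2) |T| ≤ 3·x·s/q. -/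
/-!
The proof is a union bound over two kinds of failure, each of total probability at most
`e⁻¹ s ^ (-c)`. Throughout, `exp (-x) = e⁻¹ (k s) ^ (-c)`.

* A fixed `S i` is missed with probability `(1 - p) ^ |S i| ≤ (1 - p) ^ q`, which is `0` if `p = 1`
  and at most `exp (-p q) = exp (-x)` otherwise (`measureReal_pi_bernoulli_miss`). Summing over the
  `k` sets gives at most `k e⁻¹ (k s) ^ (-c) ≤ e⁻¹ s ^ (-c)`, because `c ≥ 1`.
* If `p = 1` then `x / q ≥ 1`, and the size bound holds trivially. Otherwise `m = p s = x s / q` is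
  the mean of `|T|`, and the Chernoff bound with exponent `1` gives
  `P (|T| > 3 m) ≤ exp (m (e - 1) - 3 m) ≤ exp (-m)` (`measureReal_pi_bernoulli_card`). Since
  `q ≤ |S i| ≤ s`, this is at most `exp (-x) ≤ e⁻¹ s ^ (-c)`.

The total failure probability is at most `2 e⁻¹ s ^ (-c) ≤ s ^ (-c)`.
-/

open MeasureTheory

/-- The Bernoulli law on `Bool`. It is a probability measure only for `0 ≤ p ≤ 1`, since `ofReal`
truncates negative weights to `0`. -/
noncomputable def bernoulliBool (p : ℝ) : Measure Bool :=
  (ENNReal.ofReal p) • Measure.dirac true + (ENNReal.ofReal (1 - p)) • Measure.dirac false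

lemma isProbabilityMeasure_bernoulliBool {p : ℝ} (h0 : 0 ≤ p) (h1 : p ≤ 1) :
    IsProbabilityMeasure (bernoulliBool p) := by
  constructor
  simp only [bernoulliBool, Measure.coe_add, Measure.coe_smul, Pi.add_apply, Pi.smul_apply,
    measure_univ, smul_eq_mul, mul_one]
  rw [← ENNReal.ofReal_add h0 (by linarith)]
  simp

/-- A fixed set `A` is missed by the random set with probability `(1 - p) ^ |A|`. -/
lemma measureReal_pi_bernoulli_miss {U : Type*} [Fintype U] {p : ℝ} (h0 : 0 ≤ p) (h1 : p ≤ 1)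
    (A : Finset U) :
    (Measure.pi fun _ : U => bernoulliBool p).real {f | ∀ u ∈ A, f u = false}
      = (1 - p) ^ A.card := by
  classical
  have := isProbabilityMeasure_bernoulliBool h0 h1
  have hset : {f : U → Bool | ∀ u ∈ A, f u = false}
      = Set.pi Set.univ fun u => if u ∈ A then {false} else Set.univ := by
    ext f
    simp only [Set.mem_ofPred_eq, Set.mem_pi, Set.mem_univ, true_implies]
    refine forall_congr' fun u => ?_
    by_cases hu : u ∈ A <;> simp [hu]
  have hfalse : bernoulliBool p {false} = ENNReal.ofReal (1 - p) := by
    simp [bernoulliBool]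
  have hprod : ∀ u, bernoulliBool p (if u ∈ A then {false} else Set.univ)
      = if u ∈ A then ENNReal.ofReal (1 - p) else 1 := by
    intro u
    split_ifs
    · exact hfalse
    · exact measure_univ
  rw [measureReal_def, hset, Measure.pi_pi, Finset.prod_congr rfl fun u _ => hprod u]
  simp only [Finset.prod_ite_mem, Finset.univ_inter, Finset.prod_const]
  rw [ENNReal.toReal_pow, ENNReal.toReal_ofReal (by linarith)]

/-- Chernoff bound for the upper tail of `|T|` at three times its mean, obtained from Markov's
inequality for `exp |T|`; the exponent comes from `e - 1 - 3 ≤ -1`. -/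
lemma measureReal_pi_bernoulli_card {U : Type*} [Fintype U] {p : ℝ} (h0 : 0 ≤ p) (h1 : p ≤ 1) :
    (Measure.pi fun _ : U => bernoulliBool p).real
      {f | 3 * (p * Fintype.card U) ≤ ((Finset.univ.filter fun u : U => f u = true).card : ℝ)}
      ≤ Real.exp (-(p * Fintype.card U)) := by
  classical
  have := isProbabilityMeasure_bernoulliBool h0 h1
  set ν := Measure.pi fun _ : U => bernoulliBool p with hν
  set m : ℝ := p * Fintype.card U with hm
  have hm0 : 0 ≤ m := by positivity
  let g : Bool → ℝ := fun b => if b = true then Real.exp 1 else 1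
  have hg : ∀ f : U → Bool, ∏ u, g (f u)
      = Real.exp ((Finset.univ.filter fun u : U => f u = true).card : ℝ) := by
    intro f
    simp only [g]
    rw [Finset.prod_ite]
    simp [← Real.exp_nat_mul]
  have hint1 : ∫ b, g b ∂(bernoulliBool p) = p * Real.exp 1 + (1 - p) := by
    rw [bernoulliBool, integral_add_measure
        (Integrable.smul_measure .of_finite ENNReal.ofReal_ne_top)
        (Integrable.smul_measure .of_finite ENNReal.ofReal_ne_top),
      integral_smul_measure, integral_smul_measure, integral_dirac, integral_dirac,
      ENNReal.toReal_ofReal h0, ENNReal.toReal_ofReal (by linarith)]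
    simp [g]
  have hint : ∫ f, ∏ u, g (f u) ∂ν ≤ Real.exp (m * (Real.exp 1 - 1)) := by
    rw [hν, integral_fintype_prod_eq_pow g, hint1]
    have h2 : p * Real.exp 1 + (1 - p) ≤ Real.exp (p * (Real.exp 1 - 1)) := by
      have := Real.add_one_le_exp (p * (Real.exp 1 - 1))
      linarith
    have h3 : 0 ≤ p * Real.exp 1 + (1 - p) := by
      have := Real.exp_pos 1
      have : 0 ≤ p * Real.exp 1 := by positivity
      linarith
    refine (pow_le_pow_left₀ h3 h2 _).trans_eq ?_
    rw [← Real.exp_nat_mul, hm]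
    congr 1
    ring
  have hmarkov := mul_meas_ge_le_integral_of_nonneg (μ := ν) (f := fun f => ∏ u, g (f u))
    (ae_of_all _ fun f => by simp only [hg]; exact (Real.exp_pos _).le) .of_finite
    (Real.exp (3 * m))
  simp only [hg, Real.exp_le_exp] at hmarkov hint
  have h4 := hmarkov.trans hint
  have h5 : Real.exp (m * (Real.exp 1 - 1)) ≤ Real.exp (3 * m) * Real.exp (-m) := by
    rw [← Real.exp_add, Real.exp_le_exp]
    nlinarith [Real.exp_one_lt_three]
  exact le_of_mul_le_mul_left (h4.trans h5) (Real.exp_pos _)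

/-- **randomized hitting set.** Let `c ≥ 1`, `U` a finite set of size `s ≥ 1`,
and `S_1, …, S_k` (`k ≥ 1`) subsets of `U`, each of size at least `q ≥ 1`. Let
`x = c·ln(k·s) + 1` and `p = min(x/q, 1)`. Let `T` be the random subset of `U` obtained by
including each element of `U` independently with probability `p` (modeled by the product of
Bernoulli(p) measures on `U → Bool`, with `T = {u | f u = true}`). Then with probability at
least `1 − 1/s^c`, both: every `S_i` meets `T`, and `|T| ≤ 3·x·s/q`. -/
theorem randomized_hitting_set
    {U : Type*} [Fintype U] [Nonempty U]
    (c : ℝ) (hc : 1 ≤ c)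
    (s : ℕ) (hs : s = Fintype.card U) (hs1 : 1 ≤ s)
    (k : ℕ) (hk : 1 ≤ k)
    (S : Fin k → Finset U)
    (q : ℕ) (hq : 1 ≤ q) (hSq : ∀ i : Fin k, q ≤ (S i).card)
    (x : ℝ) (hx : x = c * Real.log (k * s) + 1)
    (p : ℝ) (hp : p = min (x / q) 1)
    (μ : Measure (U → Bool))
    (hμ : μ = Measure.pi fun _ : U =>
      (ENNReal.ofReal p) • Measure.dirac true + (ENNReal.ofReal (1 - p)) • Measure.dirac false) :
    ENNReal.ofReal (1 - 1 / (s : ℝ) ^ c) ≤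
      μ {f : U → Bool |
        (∀ i : Fin k, ∃ u ∈ S i, f u = true) ∧
        ((Finset.univ.filter fun u : U => f u = true).card : ℝ) ≤ 3 * x * s / q} := by
  have hk' : (1 : ℝ) ≤ k := by exact_mod_cast hk
  have hs' : (1 : ℝ) ≤ s := by exact_mod_cast hs1
  have hq' : (1 : ℝ) ≤ q := by exact_mod_cast hq
  have hks : (1 : ℝ) ≤ k * s := by nlinarith
  have hx1 : 1 ≤ x := by
    have := mul_nonneg (by linarith : 0 ≤ c) (Real.log_nonneg hks)
    linarith
  have hxq : 0 ≤ x / q := by positivity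
  have h0 : 0 ≤ p := by rw [hp]; exact le_min hxq zero_le_one
  have h1 : p ≤ 1 := by rw [hp]; exact min_le_right _ _
  have hqs : (q : ℝ) ≤ s := by
    have := (hSq ⟨0, hk⟩).trans (Finset.card_le_univ _)
    rw [← hs] at this
    exact_mod_cast this
  have := isProbabilityMeasure_bernoulliBool h0 h1
  have hμ' : μ = Measure.pi fun _ : U => bernoulliBool p := hμ
  have : IsProbabilityMeasure μ := by rw [hμ']; infer_instance
  have hsc : 0 < (s : ℝ) ^ (-c) := by positivity
  have hexp : k * Real.exp (-x) ≤ Real.exp (-1) * (s : ℝ) ^ (-c) := by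
    have h2 : Real.exp (-x) = Real.exp (-1) * ((k : ℝ) ^ (-c) * (s : ℝ) ^ (-c)) := by
      rw [← Real.mul_rpow (by positivity) (by positivity),
        Real.rpow_def_of_pos (by positivity), ← Real.exp_add, hx]
      congr 1
      ring
    have h3 : (k : ℝ) * (k : ℝ) ^ (-c) ≤ 1 := by
      have h4 : (k : ℝ) ^ (-c) ≤ (k : ℝ) ^ (-1 : ℝ) :=
        Real.rpow_le_rpow_of_exponent_le hk' (by linarith)
      rw [Real.rpow_neg_one] at h4
      calc (k : ℝ) * (k : ℝ) ^ (-c) ≤ k * (k : ℝ)⁻¹ := by gcongr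
        _ = 1 := mul_inv_cancel₀ (by positivity)
    calc k * Real.exp (-x)
        = (k * (k : ℝ) ^ (-c)) * (Real.exp (-1) * (s : ℝ) ^ (-c)) := by rw [h2]; ring
      _ ≤ 1 * (Real.exp (-1) * (s : ℝ) ^ (-c)) := by gcongr
      _ = _ := one_mul _
  have hmiss : ∀ i, μ.real {f | ∀ u ∈ S i, f u = false} ≤ Real.exp (-x) := by
    intro i
    rw [hμ', measureReal_pi_bernoulli_miss h0 h1]
    refine (pow_le_pow_of_le_one (by linarith) (by linarith) (hSq i)).trans ?_
    rcases le_total 1 (x / q) with h | h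
    · rw [hp, min_eq_right h, sub_self, zero_pow (by omega)]
      exact (Real.exp_pos _).le
    · have hpq : p * q = x := by
        rw [hp, min_eq_left h]
        field_simp
      have h2 : 1 - p ≤ Real.exp (-p) := by
        have := Real.add_one_le_exp (-p)
        linarith
      refine (pow_le_pow_left₀ (by linarith) h2 q).trans_eq ?_
      rw [← Real.exp_nat_mul, ← hpq]
      congr 1
      ring
  have hcard : μ.real {f | 3 * x * s / q <
      ((Finset.univ.filter fun u : U => f u = true).card : ℝ)} ≤ Real.exp (-x) := by
    rcases le_total 1 (x / q) with h | h
    · have hempty : {f : U → Bool | 3 * x * s / q <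
          ((Finset.univ.filter fun u : U => f u = true).card : ℝ)} = ∅ := by
        ext f
        simp only [Set.mem_ofPred_eq, Set.mem_empty_iff_false, iff_false, not_lt]
        have h2 : ((Finset.univ.filter fun u : U => f u = true).card : ℝ) ≤ s := by
          rw [hs]
          exact_mod_cast Finset.card_le_univ _
        have h3 : 3 * x * s / q = 3 * (x / q) * s := by ring
        rw [h3]
        nlinarith
      rw [hempty, measureReal_empty]
      exact (Real.exp_pos _).le
    · have hps : p * (Fintype.card U : ℝ) = x * s / q := by
        rw [hp, min_eq_left h, hs]
        ring
      have h2 := measureReal_pi_bernoulli_card (U := U) h0 h1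
      rw [← hμ', hps] at h2
      refine (measureReal_mono ?_).trans (h2.trans ?_)
      · intro f hf
        simp only [Set.mem_ofPred_eq] at hf ⊢
        refine le_trans (le_of_eq ?_) hf.le
        ring
      · rw [Real.exp_le_exp, neg_le_neg_iff, le_div_iff₀ (by positivity)]
        gcongr
  set G : Set (U → Bool) := {f : U → Bool |
        (∀ i : Fin k, ∃ u ∈ S i, f u = true) ∧
        ((Finset.univ.filter fun u : U => f u = true).card : ℝ) ≤ 3 * x * s / q} with hG
  have hGc : Gᶜ ⊆ (⋃ i, {f : U → Bool | ∀ u ∈ S i, f u = false}) ∪ {f | 3 * x * s / q <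
      ((Finset.univ.filter fun u : U => f u = true).card : ℝ)} := by
    intro f hf
    by_contra hcon
    simp only [Set.mem_union, Set.mem_iUnion, Set.mem_ofPred_eq, not_or, not_exists, not_forall,
      not_lt, Bool.not_eq_false, exists_prop] at hcon
    exact hf hcon
  have hbad : μ.real Gᶜ ≤ (s : ℝ) ^ (-c) := by
    have hu : μ.real (⋃ i, {f : U → Bool | ∀ u ∈ S i, f u = false}) ≤ k * Real.exp (-x) := by
      refine (measureReal_iUnion_fintype_le _).trans
        ((Finset.sum_le_sum fun i _ => hmiss i).trans_eq ?_)
      simp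
    have hx' : Real.exp (-x) ≤ k * Real.exp (-x) :=
      le_mul_of_one_le_left (Real.exp_pos _).le hk'
    have he : Real.exp (-1) ≤ 1 / 2 := by
      rw [Real.exp_neg, inv_eq_one_div]
      exact one_div_le_one_div_of_le two_pos Real.exp_one_gt_two.le
    calc μ.real Gᶜ ≤ _ := measureReal_mono hGc
      _ ≤ _ := measureReal_union_le _ _
      _ ≤ k * Real.exp (-x) + Real.exp (-x) := add_le_add hu hcard
      _ ≤ (s : ℝ) ^ (-c) := by nlinarith
  have hmeas : MeasurableSet G := G.toFinite.measurableSet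
  rw [probReal_compl_eq_one_sub hmeas, Real.rpow_neg (by positivity), inv_eq_one_div] at hbad
  rw [ENNReal.ofReal_le_iff_le_toReal (measure_ne_top _ _), ← measureReal_def]
  linarith
end

section
/- Let G = (V, E, w_G) be a weighted directed graph with non-negative integer edge weights, let n = |V|, let s ∈ V, let Δ be a positive integer, and let δ ∈ ℕ be such that either δ = 0 or 2^{δ+1}·n ≤ Δ. Let Ĝ = (V, Ê, ŵ) be the graph with edge set Ê = {e ∈ E : w_G(e) ≤ Δ} and weights ŵ(e) = ⌊w_G(e)/2^δ⌋. Let v ∈ V be a node with dist_G(s, v) ≤ Δ, and let d̂(v) ∈ ℕ satisfy 2·d̂(v) ≥ dist_Ĝ(s, v). Then dist_G(s, v) ≤ (3/4)·Δ + 2^δ·d̂(v). -/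
/-!
A walk attaining the distance in the rescaled graph can be shortcut to one without repeated
nodes (`exists_nodup_walk`), hence with at most `n` nodes. Rounding down loses at most
`2^δ - 1` per edge, so in `G` this walk weighs at most `2^δ · 2d̂ + (2^δ - 1) · n`
(`walkWeight_le_scale`), and `(2^δ - 1) · n ≤ Δ / 2` by the choice of `δ`. Averaging
`dist_G ≤ 2^(δ+1) · d̂ + Δ / 2` with the hypothesis `dist_G ≤ Δ` gives the claim.
-/

open scoped ENat ENNReal

theorem walkWeight_cons_cons {V : Type*} (w : V × V → ℕ∞) (a b : V) (t : List V) :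
    walkWeight w (a :: b :: t) = w (a, b) + walkWeight w (b :: t) := by
  simp [walkWeight]

theorem walkWeight_suffix_le {V : Type*} (w : V × V → ℕ∞) (l : List V) (a : V) (t : List V) :
    walkWeight w (a :: t) ≤ walkWeight w (l ++ a :: t) := by
  induction l with
  | nil => simp
  | cons b l ih =>
    refine ih.trans ?_
    cases l with
    | nil =>
      simp only [List.nil_append, List.cons_append, walkWeight_cons_cons]
      exact le_add_self
    | cons c l =>
      simp only [List.cons_append, walkWeight_cons_cons w b]
      exact le_add_self

/-- Cutting out cycles: a walk can be made free of repeated nodes without gaining weight. -/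
theorem exists_nodup_walk {V : Type*} (E : Set (V × V)) (w : V × V → ℕ∞) (v : V)
    (p : List V) : ∀ u, IsWalk E u v p →
      ∃ q, IsWalk E u v q ∧ q.Nodup ∧ walkWeight w q ≤ walkWeight w p := by
  induction p with
  | nil => intro u h; exact absurd rfl h.1
  | cons a p ih =>
    rintro u ⟨-, hu, hv, hc⟩
    obtain rfl : a = u := by simpa using hu
    cases p with
    | nil => exact ⟨[a], ⟨by simp, hu, hv, hc⟩, by simp, le_rfl⟩
    | cons b t =>
      obtain ⟨hab, hc⟩ := List.isChain_cons_cons.mp hc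
      rw [List.getLast?_cons_cons] at hv
      obtain ⟨q, ⟨hq0, hqb, hqv, hqc⟩, hqn, hqw⟩ := ih b ⟨by simp, by simp, hv, hc⟩
      by_cases ha : a ∈ q
      · -- The shortened walk returns to `a`: keep only its part from `a` on.
        obtain ⟨l, r, rfl⟩ := List.append_of_mem ha
        refine ⟨a :: r, ⟨by simp, by simp, ?_, ?_⟩, ?_, ?_⟩
        · simpa [List.getLast?_append] using hqv
        · exact List.IsChain.right_of_append hqc
        · exact (List.nodup_append.mp hqn).2.1
        · rw [walkWeight_cons_cons]
          exact ((walkWeight_suffix_le w l a r).trans hqw).trans le_add_self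
      · cases q with
        | nil => exact absurd rfl hq0
        | cons c q =>
          obtain rfl : c = b := by simpa using hqb
          refine ⟨a :: c :: q, ⟨by simp, by simp, ?_, ?_⟩, List.nodup_cons.mpr ⟨ha, hqn⟩, ?_⟩
          · rw [List.getLast?_cons_cons]; exact hqv
          · exact List.isChain_cons_cons.mpr ⟨hab, hqc⟩
          · rw [walkWeight_cons_cons, walkWeight_cons_cons]
            gcongr

theorem walkWeight_le_scale {V : Type*} (w w' : V × V → ℕ∞) (K r : ℕ∞)
    (h : ∀ e, w e ≤ K * w' e + r) (p : List V) :
    walkWeight w p ≤ K * walkWeight w' p + r * p.length := by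
  induction p with
  | nil => simp [walkWeight]
  | cons a p ih =>
    cases p with
    | nil => simp [walkWeight]
    | cons b t =>
      rw [walkWeight_cons_cons, walkWeight_cons_cons]
      calc _ ≤ (K * w' (a, b) + r) + (K * walkWeight w' (b :: t) + r * (b :: t).length) :=
            add_le_add (h _) ih
        _ = _ := by
            simp only [List.length_cons, Nat.cast_add, Nat.cast_one]
            ring

/-- Let `Δ ≥ 1`, and `δ ∈ ℕ` with `δ = 0` or `2^{δ+1}·n ≤ Δ`. Let
`Ĝ = (V, Ê, ŵ)` with `Ê = {e ∈ E : w_G(e) ≤ Δ}` and `ŵ(e) = ⌊w_G(e)/2^δ⌋`. If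
`dist_G(s,v) ≤ Δ` and `d̂(v) ∈ ℕ` satisfies `2·d̂(v) ≥ dist_Ĝ(s,v)`, then
`dist_G(s,v) ≤ (3/4)·Δ + 2^δ·d̂(v)`. -/
theorem scaled_distance_upper_bound
    {V : Type*} [Fintype V]
    (E : Set (V × V)) (wG : V × V → ℕ) (s : V)
    (n : ℕ) (hn : n = Fintype.card V)
    (Δ : ℕ) (hΔ : 0 < Δ)
    (δ : ℕ) (hδ : δ = 0 ∨ 2 ^ (δ + 1) * n ≤ Δ)
    (Ehat : Set (V × V)) (hEhat : Ehat = {e ∈ E | wG e ≤ Δ})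
    (what : V × V → ℕ) (hwhat : ∀ e : V × V, what e = wG e / 2 ^ δ)
    (v : V) (hv : gdist E (fun e => (wG e : ℕ∞)) s v ≤ (Δ : ℕ∞))
    (dhatv : ℕ)
    (hdhatv : gdist Ehat (fun e => (what e : ℕ∞)) s v ≤ ((2 * dhatv : ℕ) : ℕ∞)) :
    (((gdist E (fun e => (wG e : ℕ∞)) s v).toNat : ℝ)) ≤
      (3 : ℝ) / 4 * Δ + 2 ^ δ * dhatv := by
  have hne : {c | ∃ p, IsWalk Ehat s v p ∧ walkWeight (fun e => (what e : ℕ∞)) p = c}.Nonempty := by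
    by_contra hcon
    rw [Set.not_nonempty_iff_eq_empty] at hcon
    rw [gdist, hcon, sInf_empty] at hdhatv
    exact ENat.natCast_ne_top _ (top_le_iff.mp hdhatv)
  obtain ⟨p, hp, hpw⟩ := csInf_mem hne
  obtain ⟨q, ⟨hq0, hqs, hqv, hqc⟩, hqn, hqw⟩ :=
    exists_nodup_walk _ (fun e => (what e : ℕ∞)) v p s hp
  have hqw' : walkWeight (fun e => (what e : ℕ∞)) q ≤ ((2 * dhatv : ℕ) : ℕ∞) :=
    hqw.trans (hpw.le.trans hdhatv)
  have hqE : IsWalk E s v q := by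
    refine ⟨hq0, hqs, hqv, hqc.imp fun a b hab => ?_⟩
    rw [hEhat] at hab
    exact hab.1
  have hlen : q.length ≤ n := hn ▸ hqn.length_le_card
  have hround : ∀ e, ((wG e : ℕ) : ℕ∞) ≤ ((2 ^ δ : ℕ) : ℕ∞) * (what e : ℕ∞)
      + ((2 ^ δ - 1 : ℕ) : ℕ∞) := by
    intro e
    rw [hwhat]
    have h1 := Nat.div_add_mod (wG e) (2 ^ δ)
    have h2 := Nat.mod_lt (wG e) (Nat.two_pow_pos δ)
    have h3 : wG e ≤ 2 ^ δ * (wG e / 2 ^ δ) + (2 ^ δ - 1) := by omega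
    exact_mod_cast h3
  have hdist : gdist E (fun e => (wG e : ℕ∞)) s v
      ≤ ((2 ^ δ * (2 * dhatv) + (2 ^ δ - 1) * n : ℕ) : ℕ∞) := by
    calc gdist E (fun e => (wG e : ℕ∞)) s v ≤ walkWeight (fun e => (wG e : ℕ∞)) q :=
          sInf_le ⟨q, hqE, rfl⟩
      _ ≤ _ := walkWeight_le_scale _ _ _ _ hround q
      _ ≤ ((2 ^ δ : ℕ) : ℕ∞) * ((2 * dhatv : ℕ) : ℕ∞) + ((2 ^ δ - 1 : ℕ) : ℕ∞) * (n : ℕ∞) := by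
          gcongr
      _ = _ := by rw [Nat.cast_add, Nat.cast_mul (2 ^ δ), Nat.cast_mul (2 ^ δ - 1)]
  have herr : 2 * ((2 ^ δ - 1) * n) ≤ Δ := by
    rcases hδ with rfl | h
    · simp
    · calc 2 * ((2 ^ δ - 1) * n) ≤ 2 * (2 ^ δ * n) := by gcongr; exact Nat.sub_le _ _
        _ = 2 ^ (δ + 1) * n := by ring
        _ ≤ Δ := h
  have h1 := ENat.toNat_le_of_le_natCast hv
  have h2 := ENat.toNat_le_of_le_natCast hdist
  generalize (gdist E (fun e => (wG e : ℕ∞)) s v).toNat = d at h1 h2 ⊢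
  generalize (2 ^ δ - 1) * n = r at herr h2
  have h1' : (d : ℝ) ≤ Δ := by exact_mod_cast h1
  have h2' : (d : ℝ) ≤ 2 ^ δ * (2 * dhatv) + r := by exact_mod_cast h2
  have h3' : 2 * (r : ℝ) ≤ Δ := by exact_mod_cast herr
  linarith
end

section
/- Let k ≥ 1 be an integer and set ε = 1/k. Let G = (V, E, w_G) be a weighted directed graph with non-negative integer edge weights, let n = |V|, let s ∈ V, and let h be an integer with 1 ≤ h ≤ n − 1. Let G' = (V, E, w_{G'}) be the graph with edge weights w_{G'}(e) = (1 + k)·n·w_G(e) + 1 for every e ∈ E. Assume every node of V is reachable from s by a path with at most h edges, and suppose d' : V → ℝ satisfies dist_{G'}(s, v) ≤ d'(v) ≤ (1 + ε)·dist_{G'}^h(s, v) for every node v ∈ V. Then the estimate d̃(v) := ε·⌊d'(v)/((1 + ε)·n)⌋ satisfies dist_G(s, v) ≤ d̃(v) ≤ (1 + ε)·dist_G^h(s, v) for every node v ∈ V. -/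
/-!
A walk `p` has weight `w_{G'}(p) = (1+k)·n·w_G(p) + (number of edges of p)`.
Applied to a shortest walk of `G'` this gives `dist_{G'} ≥ (1+k)·n·dist_G`; applied to a
shortest `h`-hop walk of `G` it gives `dist_{G'}^h ≤ (1+k)·n·dist_G^h + h`, with `h < n`.
Since `(1+ε)·n = (1+k)·n/k`, the quotient `d'(v)/((1+ε)·n)` is at least the integer
`k·dist_G` and strictly below the integer `(1+k)·dist_G^h + 1`, so its floor lies between
`k·dist_G` and `(1+k)·dist_G^h`; multiplying by `ε = 1/k` gives the claim.
The lemmas `gdist_spec` and `hdist_spec` provide the shortest walks, and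
`natWeight_affine` the relation between the weights.
-/

open scoped ENat ENNReal

section Reduction

variable {V : Type*}

/-- The weight of a walk for natural-number edge weights, as a natural number. -/
def natWeight (w : V × V → ℕ) (p : List V) : ℕ :=
  ((p.zip p.tail).map w).sum

lemma walkWeight_natCast (w : V × V → ℕ) (p : List V) :
    walkWeight (fun e => (w e : ℕ∞)) p = (natWeight w p : ℕ∞) := by
  unfold walkWeight natWeight
  induction p.zip p.tail with
  | nil => simp
  | cons a l ih => simp [ih]

/-- An affine change of edge weights changes the weight of a walk affinely, the constant
term being counted once per edge. -/
lemma natWeight_affine (w w' : V × V → ℕ) (c : ℕ) (hw : ∀ e, w' e = c * w e + 1)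
    (p : List V) : natWeight w' p = c * natWeight w p + (p.length - 1) := by
  have key : ∀ l : List (V × V), (l.map w').sum = c * (l.map w).sum + l.length := by
    intro l
    induction l with
    | nil => simp
    | cons a l ih =>
      simp only [List.map_cons, List.sum_cons, List.length_cons, ih, hw]
      ring
  unfold natWeight
  rw [key]
  simp

/-- If a walk exists, the distance is finite, attained, and a lower bound. -/
lemma gdist_spec (E : Set (V × V)) (w : V × V → ℕ) (u v : V)
    (hne : ∃ p, IsWalk E u v p) :
    (∃ p, IsWalk E u v p ∧
      natWeight w p = (gdist E (fun e => (w e : ℕ∞)) u v).toNat) ∧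
    ∀ p, IsWalk E u v p →
      (gdist E (fun e => (w e : ℕ∞)) u v).toNat ≤ natWeight w p := by
  obtain ⟨q, hq⟩ := hne
  obtain ⟨p, hp, hpw⟩ := csInf_mem (s := {c | ∃ p, IsWalk E u v p ∧
    walkWeight (fun e => (w e : ℕ∞)) p = c}) ⟨_, q, hq, rfl⟩
  have hpw' : (natWeight w p : ℕ∞) = gdist E (fun e => (w e : ℕ∞)) u v := by
    rw [← walkWeight_natCast]
    exact hpw
  refine ⟨⟨p, hp, by rw [← hpw', ENat.toNat_natCast]⟩, fun r hr => ?_⟩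
  have hle : gdist E (fun e => (w e : ℕ∞)) u v ≤ (natWeight w r : ℕ∞) :=
    sInf_le ⟨r, hr, walkWeight_natCast w r⟩
  rw [← hpw'] at hle ⊢
  exact_mod_cast hle

/-- If a walk with at most `h` edges exists, the `h`-hop distance is finite, attained, and a
lower bound. -/
lemma hdist_spec (E : Set (V × V)) (w : V × V → ℕ) (h : ℕ) (u v : V)
    (hne : ∃ p, IsWalk E u v p ∧ p.length ≤ h + 1) :
    (∃ p, IsWalk E u v p ∧ p.length ≤ h + 1 ∧
      natWeight w p = (hdist E (fun e => (w e : ℕ∞)) h u v).toNat) ∧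
    ∀ p, IsWalk E u v p → p.length ≤ h + 1 →
      (hdist E (fun e => (w e : ℕ∞)) h u v).toNat ≤ natWeight w p := by
  obtain ⟨q, hq, hql⟩ := hne
  obtain ⟨p, hp, hpl, hpw⟩ := csInf_mem (s := {c | ∃ p, IsWalk E u v p ∧ p.length ≤ h + 1 ∧
    walkWeight (fun e => (w e : ℕ∞)) p = c}) ⟨_, q, hq, hql, rfl⟩
  have hpw' : (natWeight w p : ℕ∞) = hdist E (fun e => (w e : ℕ∞)) h u v := by
    rw [← walkWeight_natCast]
    exact hpw
  refine ⟨⟨p, hp, hpl, by rw [← hpw', ENat.toNat_natCast]⟩, fun r hr hrl => ?_⟩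
  have hle : hdist E (fun e => (w e : ℕ∞)) h u v ≤ (natWeight w r : ℕ∞) :=
    sInf_le ⟨r, hr, hrl, walkWeight_natCast w r⟩
  rw [← hpw'] at hle ⊢
  exact_mod_cast hle

end Reduction

/-- Let `k ≥ 1`, `ε = 1/k`, and let `G'` have weights
`w_{G'}(e) = (1+k)·n·w_G(e) + 1`. Assume every node is reachable from `s` by a path with
at most `h` edges, and `d' : V → ℝ` satisfies
`dist_{G'}(s,v) ≤ d'(v) ≤ (1+ε)·dist_{G'}^h(s,v)`. Then
`d̃(v) := ε·⌊d'(v)/((1+ε)·n)⌋` satisfies `dist_G(s,v) ≤ d̃(v) ≤ (1+ε)·dist_G^h(s,v)`. -/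
theorem positive_to_nonnegative_weight_reduction
    {V : Type*} [Fintype V]
    (k : ℕ) (hk : 1 ≤ k) (ε : ℝ) (hε : ε = 1 / (k : ℝ))
    (E : Set (V × V)) (wG : V × V → ℕ)
    (n : ℕ) (hn : n = Fintype.card V)
    (s : V) (h : ℕ) (hh1 : 1 ≤ h) (hh2 : h ≤ n - 1)
    (wG' : V × V → ℕ) (hwG' : ∀ e : V × V, wG' e = (1 + k) * n * wG e + 1)
    (hreach : ∀ v : V, ∃ p : List V, IsWalk E s v p ∧ p.length ≤ h + 1)
    (d' : V → ℝ)
    (hd' : ∀ v : V,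
      ((gdist E (fun e => (wG' e : ℕ∞)) s v).toNat : ℝ) ≤ d' v ∧
      d' v ≤ (1 + ε) * ((hdist E (fun e => (wG' e : ℕ∞)) h s v).toNat : ℝ))
    (dtil : V → ℝ)
    (hdtil : ∀ v : V, dtil v = ε * (⌊d' v / ((1 + ε) * n)⌋ : ℤ)) :
    ∀ v : V,
      ((gdist E (fun e => (wG e : ℕ∞)) s v).toNat : ℝ) ≤ dtil v ∧
      dtil v ≤ (1 + ε) * ((hdist E (fun e => (wG e : ℕ∞)) h s v).toNat : ℝ) := by
  intro v
  obtain ⟨hlow, hupp⟩ := hd' v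
  rw [hdtil v]
  have hwalk : ∃ p, IsWalk E s v p := (hreach v).imp fun _ hp => hp.1
  obtain ⟨⟨p, hp, hpw⟩, -⟩ := gdist_spec E wG' s v hwalk
  have hpmin := (gdist_spec E wG s v hwalk).2 p hp
  obtain ⟨⟨q, hq, hql, hqw⟩, -⟩ := hdist_spec E wG h s v (hreach v)
  have hqmin := (hdist_spec E wG' h s v (hreach v)).2 q hq hql
  rw [natWeight_affine wG wG' _ hwG'] at hpw hqmin
  rw [hqw] at hqmin
  generalize (gdist E (fun e => (wG e : ℕ∞)) s v).toNat = g at *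
  generalize (gdist E (fun e => (wG' e : ℕ∞)) s v).toNat = g' at *
  generalize (hdist E (fun e => (wG e : ℕ∞)) h s v).toNat = b at *
  generalize (hdist E (fun e => (wG' e : ℕ∞)) h s v).toNat = b' at *
  have hg : (1 + k) * n * g ≤ g' := by
    have := Nat.mul_le_mul_left ((1 + k) * n) hpmin
    omega
  have hb : b' < (1 + k) * n * b + n := by omega
  have hgR : (1 + (k : ℝ)) * n * g ≤ g' := by exact_mod_cast hg
  have hbR : (b' : ℝ) < (1 + (k : ℝ)) * n * b + n := by exact_mod_cast hb
  have hkpos : (0 : ℝ) < k := by exact_mod_cast hk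
  have hnpos : (0 : ℝ) < n := by
    have : 0 < n := by omega
    exact_mod_cast this
  have hεpos : 0 < ε := by rw [hε]; positivity
  have hεk : ε * k = 1 := by rw [hε]; field_simp
  have hden : 0 < (1 + ε) * n := by positivity
  have hfl : ((k : ℤ) * g) ≤ ⌊d' v / ((1 + ε) * n)⌋ := by
    rw [Int.le_floor, le_div_iff₀ hden]
    push_cast
    calc (k : ℝ) * g * ((1 + ε) * n) = (k + ε * k) * n * g := by ring
      _ = (1 + (k : ℝ)) * n * g := by rw [hεk]; ring
      _ ≤ d' v := hgR.trans hlow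
  have hfu : ⌊d' v / ((1 + ε) * n)⌋ ≤ (1 + (k : ℤ)) * b := by
    rw [← Int.lt_add_one_iff, Int.floor_lt, div_lt_iff₀ hden]
    push_cast
    calc d' v ≤ (1 + ε) * b' := hupp
      _ < (1 + ε) * ((1 + (k : ℝ)) * n * b + n) := by gcongr
      _ = ((1 + (k : ℝ)) * b + 1) * ((1 + ε) * n) := by ring
  have hflR : (k : ℝ) * g ≤ (⌊d' v / ((1 + ε) * n)⌋ : ℤ) := by exact_mod_cast hfl
  have hfuR : ((⌊d' v / ((1 + ε) * n)⌋ : ℤ) : ℝ) ≤ (1 + (k : ℝ)) * b := by exact_mod_cast hfu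
  constructor
  · calc (g : ℝ) = ε * (k * g) := by rw [← mul_assoc, hεk, one_mul]
      _ ≤ _ := by gcongr
  · calc ε * ((⌊d' v / ((1 + ε) * n)⌋ : ℤ) : ℝ) ≤ ε * ((1 + (k : ℝ)) * b) := by gcongr
      _ = (ε + ε * k) * b := by ring
      _ = (1 + ε) * b := by rw [hεk]; ring
end
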